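/- Assume RH. Then there exist a constant A > 0 and a natural number n₀ such that for every integer n ≥ n₀ there is a real number T with n < T < n + 1 such that |T − γ| > A / log n for every real number γ with ζ(1/2 + iγ) = 0. In particular, the segment of the critical line from 1/2 + i(T − A/log n) to 1/2 + i(T + A/log n) contains no zeros of ζ. -/

import Mathlib

open Complex

section GapHelpers

open Set Filter Topology MeasureTheory

/-- Blaschke-product form of Jensen's inequality: many zeros force a small value at the centre. -/
lemma gap_jensen {U : Set ℂ} (hU : IsOpen U) {r R M : ℝ} (hr : 0 ≤ r) (hrR : r < R)
    (hUR : Metric.closedBall (0 : ℂ) R ⊆ U) (k : ℕ) :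
    ∀ (f : ℂ → ℂ) (Z : Finset ℂ), Z.card = k → DifferentiableOn ℂ f U →
      (∀ z ∈ Metric.sphere (0 : ℂ) R, ‖f z‖ ≤ M) →
      (∀ z ∈ Z, ‖z‖ ≤ r ∧ f z = 0) → ‖f 0‖ ≤ M * (r / R) ^ k := by
  have hR : 0 < R := hr.trans_lt hrR
  induction k with
  | zero =>
    intro f Z _ hf hM _
    have h1 : DiffContOnCl ℂ f (Metric.ball (0 : ℂ) R) := by
      apply DifferentiableOn.diffContOnCl
      rw [closure_ball _ hR.ne']
      exact hf.mono hUR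
    have := Complex.norm_le_of_forall_mem_frontier_norm_le Metric.isBounded_ball h1
      (C := M) (by rw [frontier_ball _ hR.ne']; exact hM) (z := 0)
      (subset_closure (Metric.mem_ball_self hR))
    simpa using this
  | succ k ih =>
    intro f Z hZ hf hM hz
    have hne : Z.Nonempty := by
      rw [← Finset.card_pos]; omega
    obtain ⟨w, hw⟩ := hne
    obtain ⟨hwr, hfw⟩ := hz w hw
    have hM0 : 0 ≤ M := by
      refine (norm_nonneg _).trans (hM (R : ℂ) ?_)
      simp [abs_of_pos hR]
    by_cases hw0 : w = 0
    · subst hw0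
      rw [hfw, norm_zero]
      positivity
    have hwball : w ∈ Metric.ball (0 : ℂ) R := by simpa using hwr.trans_lt hrR
    have hdU : DifferentiableOn ℂ (dslope f w) U :=
      (Complex.differentiableOn_dslope
        (hU.mem_nhds (hUR (Metric.ball_subset_closedBall hwball)))).2 hf
    set g : ℂ → ℂ := fun z => dslope f w z * ((R ^ 2 - (starRingEnd ℂ) w * z) / R) with hg
    have hval : ∀ z, z ≠ w → dslope f w z = f z / (z - w) := by
      intro z hzw
      rw [dslope_of_ne _ hzw, slope_def_field, hfw, sub_zero]
    have hgd : DifferentiableOn ℂ g U := by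
      apply hdU.mul
      fun_prop
    have hgM : ∀ z ∈ Metric.sphere (0 : ℂ) R, ‖g z‖ ≤ M := by
      intro z hzR
      have hzw : z ≠ w := by
        rintro rfl
        simp at hzR hwball
        linarith
      have h1 := Complex.norm_canonicalFactor_eval_circle_eq_one hwball hzR
      have h2 : g z = f z * Complex.canonicalFactor R w z := by
        rw [hg, Complex.canonicalFactor_apply]
        simp only [hval z hzw]
        have : z - w ≠ 0 := sub_ne_zero.2 hzw
        have : (R : ℂ) ≠ 0 := by exact_mod_cast hR.ne'
        field_simp
      rw [h2, norm_mul, h1, mul_one]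
      exact hM z hzR
    have hgz : ∀ z ∈ Z.erase w, ‖z‖ ≤ r ∧ g z = 0 := by
      intro z hzZ
      rw [Finset.mem_erase] at hzZ
      obtain ⟨h1, h2⟩ := hz z hzZ.2
      refine ⟨h1, ?_⟩
      simp [hg, hval z hzZ.1, h2]
    have key := ih g (Z.erase w) (by rw [Finset.card_erase_of_mem hw]; omega) hgd hgM hgz
    have hg0 : ‖g 0‖ = ‖f 0‖ * R / ‖w‖ := by
      simp only [hg, hval 0 (Ne.symm hw0)]
      simp only [mul_zero, sub_zero, zero_sub, norm_mul, norm_div, norm_neg, norm_pow,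
        Complex.norm_real, Real.norm_eq_abs, abs_of_pos hR]
      field_simp
    have hwpos : 0 < ‖w‖ := norm_pos_iff.2 hw0
    rw [hg0] at key
    have h3 : ‖f 0‖ ≤ M * (r / R) ^ k * (‖w‖ / R) := by
      rw [div_le_iff₀ hwpos] at key
      rw [← mul_div_assoc, le_div_iff₀ hR]
      exact key
    refine h3.trans ?_
    rw [pow_succ, ← mul_assoc]
    gcongr

/-- The truncated fractional part. -/
noncomputable def gapFract : ℝ → ℂ := (Ioi (1 : ℝ)).indicator fun t => ((Int.fract t : ℝ) : ℂ)

lemma gapFract_norm_le (t : ℝ) : ‖gapFract t‖ ≤ 1 := by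
  unfold gapFract
  by_cases h : t ∈ Ioi (1 : ℝ)
  · rw [indicator_of_mem h, Complex.norm_real, Real.norm_eq_abs, abs_of_nonneg (Int.fract_nonneg t)]
    exact (Int.fract_lt_one t).le
  · rw [indicator_of_notMem h]; simp

lemma gapFract_measurable : Measurable gapFract := by
  unfold gapFract
  exact (Complex.measurable_ofReal.comp measurable_fract).indicator measurableSet_Ioi

lemma gapFract_mellin_diff {s : ℂ} (hs : s.re < 0) : DifferentiableAt ℂ (mellin gapFract) s := by
  refine mellin_differentiableAt_of_isBigO_rpow (a := 0) (b := s.re - 1) ?_ ?_ hs ?_ (by linarith)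
  · apply LocallyIntegrable.locallyIntegrableOn
    refine (locallyIntegrable_const (1 : ℝ)).mono gapFract_measurable.aestronglyMeasurable ?_
    exact Eventually.of_forall fun t => by simpa using gapFract_norm_le t
  · refine Asymptotics.IsBigO.of_bound 1 (Eventually.of_forall fun t => ?_)
    simpa using gapFract_norm_le t
  · refine Asymptotics.IsBigO.of_bound 1 ?_
    have : Iio (1 : ℝ) ∈ 𝓝[>] (0 : ℝ) := nhdsWithin_le_nhds (Iio_mem_nhds one_pos)
    filter_upwards [this] with t ht
    have : gapFract t = 0 := indicator_of_notMem (by simpa using le_of_lt ht) _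
    rw [this, norm_zero]
    positivity

lemma gapFract_mellin_eq (s : ℂ) :
    mellin gapFract (-s) = ∫ t in Ioi (1 : ℝ), (t : ℂ) ^ (-s - 1) * ((Int.fract t : ℝ) : ℂ) := by
  unfold mellin gapFract
  have : ∀ t : ℝ, (t : ℂ) ^ (-s - 1) • (Ioi (1 : ℝ)).indicator
      (fun t => ((Int.fract t : ℝ) : ℂ)) t =
      (Ioi (1 : ℝ)).indicator (fun t : ℝ => (t : ℂ) ^ (-s - 1) * ((Int.fract t : ℝ) : ℂ)) t := by
    intro t
    by_cases h : t ∈ Ioi (1 : ℝ)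
    · simp only [indicator_of_mem h, smul_eq_mul]
    · simp only [indicator_of_notMem h, smul_zero]
  simp_rw [this]
  rw [setIntegral_indicator measurableSet_Ioi, inter_eq_right.2 (Ioi_subset_Ioi zero_le_one)]

lemma gap_fract_integrand_norm {s : ℂ} {t : ℝ} (ht : 1 < t) :
    ‖(t : ℂ) ^ (-s - 1) * ((Int.fract t : ℝ) : ℂ)‖ ≤ t ^ (-s.re - 1) := by
  rw [norm_mul, Complex.norm_cpow_eq_rpow_re_of_pos (by linarith), Complex.norm_real,
    Real.norm_eq_abs, abs_of_nonneg (Int.fract_nonneg t)]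
  have h1 := (Int.fract_lt_one t).le
  have h2 : 0 ≤ t ^ (-s.re - 1) := Real.rpow_nonneg (by linarith) _
  simpa using mul_le_mul_of_nonneg_left h1 h2

lemma gapFract_mellin_bound {s : ℂ} (hs : 0 < s.re) : ‖mellin gapFract (-s)‖ ≤ 1 / s.re := by
  rw [gapFract_mellin_eq]
  have hlt : -s.re - 1 < -1 := by linarith
  refine (norm_integral_le_of_norm_le (g := fun t : ℝ => t ^ (-s.re - 1))
    (integrableOn_Ioi_rpow_of_lt hlt one_pos) ?_).trans ?_
  · filter_upwards [ae_restrict_mem measurableSet_Ioi] with t ht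
    exact gap_fract_integrand_norm ht
  · rw [integral_Ioi_rpow_of_lt hlt one_pos]
    simp

lemma gap_zeta_of_one_lt {s : ℂ} (hs : 1 < s.re) :
    riemannZeta s = s / (s - 1) - s * mellin gapFract (-s) := by
  have hs1 : s - 1 ≠ 0 := by
    intro h
    have := congrArg Complex.re h
    simp at this; linarith
  rw [← LSeries_one_eq_riemannZeta hs, LSeries_eq_mul_integral' 1 zero_le_one hs, gapFract_mellin_eq]
  · have hint1 : IntegrableOn (fun t : ℝ => (t : ℂ) ^ (-s)) (Ioi 1) :=
      integrableOn_Ioi_cpow_of_lt (by simp; linarith) one_pos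
    have hint2 : IntegrableOn (fun t : ℝ => (t : ℂ) ^ (-s - 1) * ((Int.fract t : ℝ) : ℂ))
        (Ioi 1) := by
      refine Integrable.mono' (g := fun t : ℝ => t ^ (-s.re - 1))
        (integrableOn_Ioi_rpow_of_lt (by linarith) one_pos) ?_ ?_
      · apply Measurable.aestronglyMeasurable
        have : Measurable fun t : ℝ => ((Int.fract t : ℝ) : ℂ) :=
          Complex.measurable_ofReal.comp measurable_fract
        fun_prop
      · filter_upwards [ae_restrict_mem measurableSet_Ioi] with t ht
        exact gap_fract_integrand_norm ht
    have heq : ∫ t in Ioi (1 : ℝ), (∑ k ∈ Finset.Icc 1 ⌊t⌋₊, (1 : ℕ → ℂ) k) * (t : ℂ) ^ (-(s + 1))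
        = ∫ t in Ioi (1 : ℝ), ((t : ℂ) ^ (-s) - (t : ℂ) ^ (-s - 1) * ((Int.fract t : ℝ) : ℂ)) := by
      refine setIntegral_congr_fun measurableSet_Ioi fun t ht => ?_
      have ht0 : (0 : ℝ) < t := lt_trans one_pos ht
      have ht0' : (t : ℂ) ≠ 0 := by exact_mod_cast ht0.ne'
      have hfl : ((⌊t⌋₊ : ℕ) : ℂ) = (t : ℂ) - ((Int.fract t : ℝ) : ℂ) := by
        have : ((⌊t⌋₊ : ℕ) : ℝ) = t - Int.fract t := by
          rw [natCast_floor_eq_intCast_floor ht0.le]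
          linarith [Int.floor_add_fract t]
        exact_mod_cast congrArg (fun x : ℝ => (x : ℂ)) this
      have hp : (t : ℂ) ^ (-s) = (t : ℂ) ^ (-s - 1) * t := by
        rw [Complex.cpow_sub _ _ ht0', Complex.cpow_one]
        field_simp
      simp only [Pi.one_apply, Finset.sum_const, Nat.card_Icc, nsmul_eq_mul, mul_one,
        Nat.add_sub_cancel]
      rw [hfl, hp, show -(s + 1) = -s - 1 by ring]
      ring
    rw [heq, integral_sub hint1 hint2, integral_Ioi_cpow_of_lt (by simp; linarith) one_pos]
    have : -s + 1 ≠ 0 := by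
      intro h; apply hs1; linear_combination -h
    simp only [Complex.ofReal_one, Complex.one_cpow]
    field_simp
    ring
  · refine Asymptotics.IsBigO.of_bound 1 (Eventually.of_forall fun n => ?_)
    simp

lemma gap_zeta_of_pos {s : ℂ} (hs : 0 < s.re) (hs1 : s ≠ 1) :
    riemannZeta s = s / (s - 1) - s * mellin gapFract (-s) := by
  set H : Set ℂ := {s : ℂ | 0 < s.re} with hH
  have hHo : IsOpen H := isOpen_lt continuous_const Complex.continuous_re
  have h1 : AnalyticOnNhd ℂ riemannZeta₁ H :=
    (differentiable_riemannZeta₁.differentiableOn).analyticOnNhd hHo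
  have h2 : AnalyticOnNhd ℂ (fun s => s - (s - 1) * (s * mellin gapFract (-s))) H := by
    apply DifferentiableOn.analyticOnNhd _ hHo
    intro z hz
    apply DifferentiableAt.differentiableWithinAt
    have : DifferentiableAt ℂ (fun s => mellin gapFract (-s)) z :=
      DifferentiableAt.comp (f := fun s : ℂ => -s) z
        (gapFract_mellin_diff (by simpa [hH] using hz)) (by fun_prop)
    fun_prop
  have hpre : IsPreconnected H := (convex_halfSpace_re_gt 0).isPreconnected
  have hev : riemannZeta₁ =ᶠ[𝓝 (2 : ℂ)] fun s => s - (s - 1) * (s * mellin gapFract (-s)) := by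
    have : {s : ℂ | 1 < s.re} ∈ 𝓝 (2 : ℂ) :=
      (isOpen_lt continuous_const Complex.continuous_re).mem_nhds (by simp)
    filter_upwards [this] with z hz
    have hz1 : z ≠ 1 := by
      rintro rfl
      simp at hz
    have hz1' : z - 1 ≠ 0 := sub_ne_zero.2 hz1
    have e1 := riemannZeta_eq_inv_sub_mul hz1
    rw [gap_zeta_of_one_lt hz] at e1
    field_simp at e1
    linear_combination -e1
  have := h1.eqOn_of_preconnected_of_eventuallyEq h2 hpre (z₀ := 2) (by simp [hH]) hev hs
  rw [riemannZeta_eq_inv_sub_mul hs1, this]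
  have hs1' : s - 1 ≠ 0 := sub_ne_zero.2 hs1
  field_simp

lemma gap_zeta_bound {s : ℂ} (hs : 1 / 5 ≤ s.re) (hs1 : 1 ≤ ‖s - 1‖) :
    ‖riemannZeta s‖ ≤ 6 * ‖s‖ := by
  have hpos : 0 < s.re := by linarith
  have hne : s ≠ 1 := by
    rintro rfl
    simp at hs1
    linarith
  rw [gap_zeta_of_pos hpos hne]
  refine (norm_sub_le _ _).trans ?_
  rw [norm_div, norm_mul]
  have a1 : ‖s‖ / ‖s - 1‖ ≤ ‖s‖ := div_le_self (norm_nonneg _) hs1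
  have a2 : ‖mellin gapFract (-s)‖ ≤ 5 := by
    refine (gapFract_mellin_bound hpos).trans ?_
    rw [div_le_iff₀ hpos]; linarith
  have a3 := mul_le_mul_of_nonneg_left a2 (norm_nonneg s)
  linarith

lemma gap_zeta_lower : ∃ C : ℝ, 0 < C ∧ ∀ t : ℝ, 1 ≤ C * ‖riemannZeta (2 + t * I)‖ := by
  have hsum2 : LSeriesSummable (fun n => ((ArithmeticFunction.moebius n : ℤ) : ℂ)) 2 :=
    ArithmeticFunction.LSeriesSummable_moebius_iff.2 (by simp)
  set D : ℝ := ∑' n, ‖LSeries.term (fun n => ((ArithmeticFunction.moebius n : ℤ) : ℂ)) 2 n‖ with hD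
  have hD0 : 0 ≤ D := tsum_nonneg fun _ => norm_nonneg _
  refine ⟨D + 1, by linarith, fun t => ?_⟩
  have hre : 1 < (2 + t * I : ℂ).re := by simp
  have hmul := ArithmeticFunction.LSeries_zeta_mul_Lseries_moebius hre
  rw [ArithmeticFunction.LSeries_zeta_eq_riemannZeta hre] at hmul
  have hb : ‖LSeries (fun n => ((ArithmeticFunction.moebius n : ℤ) : ℂ)) (2 + t * I)‖ ≤ D := by
    unfold LSeries
    exact tsum_of_norm_bounded hsum2.norm.hasSum
      fun n => LSeries.norm_term_le_of_re_le_re _ (by simp) n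
  have h1 := congrArg norm hmul
  rw [norm_mul, norm_one] at h1
  nlinarith [norm_nonneg (riemannZeta (2 + t * I))]

/-- Zero counting in a unit window of the critical line. -/
lemma gap_count : ∃ B : ℝ, 0 < B ∧ ∃ n₀ : ℕ, 3 ≤ n₀ ∧ ∀ n : ℕ, n₀ ≤ n → ∀ S : Finset ℝ,
    (∀ γ ∈ S, (n : ℝ) ≤ γ ∧ γ ≤ n + 1 ∧ riemannZeta (1 / 2 + γ * I) = 0) →
      (S.card : ℝ) ≤ B * Real.log n := by
  obtain ⟨C, hC, hlow⟩ := gap_zeta_lower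
  have hlog : 0 < Real.log (9 / 8) := Real.log_pos (by norm_num)
  refine ⟨2 / Real.log (9 / 8), by positivity, max 3 ⌈36 * C⌉₊, le_max_left _ _, ?_⟩
  intro n hn S hS
  have hn3 : (3 : ℝ) ≤ n := by exact_mod_cast (le_max_left _ _).trans hn
  have hnC : 36 * C ≤ n := (Nat.le_ceil _).trans (by exact_mod_cast (le_max_right _ _).trans hn)
  set c : ℂ := 2 + ((n + 1 / 2 : ℝ) : ℂ) * I with hc
  have hcre : c.re = 2 := by simp [hc]
  have hcim : c.im = n + 1 / 2 := by simp [hc]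
  set U : Set ℂ := {z : ℂ | c + z ≠ 1} with hU
  have hUo : IsOpen U := isOpen_ne_fun (by fun_prop) continuous_const
  have hre_im : ∀ z : ℂ, ‖z‖ ≤ 9 / 5 → |z.re| ≤ 9 / 5 ∧ |z.im| ≤ 9 / 5 := fun z hz =>
    ⟨(Complex.abs_re_le_norm z).trans hz, (Complex.abs_im_le_norm z).trans hz⟩
  have hfar : ∀ z : ℂ, ‖z‖ ≤ 9 / 5 → 1 ≤ ‖c + z - 1‖ := by
    intro z hz
    have h := abs_le.1 (hre_im z hz).2
    refine le_trans ?_ (Complex.abs_im_le_norm _)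
    refine le_trans ?_ (le_abs_self _)
    simp only [Complex.sub_im, Complex.add_im, Complex.one_im, hcim]
    linarith [h.1]
  have hUR : Metric.closedBall (0 : ℂ) (9 / 5) ⊆ U := by
    intro z hz h
    have := hfar z (by simpa using hz)
    rw [h] at this
    norm_num at this
  have hfd : DifferentiableOn ℂ (fun z => riemannZeta (c + z)) U := by
    intro z hz
    apply DifferentiableAt.differentiableWithinAt
    exact DifferentiableAt.comp (f := fun z : ℂ => c + z) z (differentiableAt_riemannZeta hz)
      (by fun_prop)
  have hcn : ‖c‖ ≤ n + 5 / 2 := by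
    refine (Complex.norm_le_abs_re_add_abs_im c).trans ?_
    rw [hcre, hcim, abs_of_pos (by norm_num), abs_of_pos (by linarith)]
    linarith
  have hM : ∀ z ∈ Metric.sphere (0 : ℂ) (9 / 5), ‖riemannZeta (c + z)‖ ≤ 36 * n := by
    intro z hz
    have hz' : ‖z‖ = 9 / 5 := by simpa using hz
    have h := abs_le.1 (hre_im z hz'.le).1
    refine (gap_zeta_bound ?_ (hfar z hz'.le)).trans ?_
    · simp only [Complex.add_re, hcre]; linarith [h.1]
    · have := norm_add_le c z
      linarith
  set e : ℝ → ℂ := fun γ => 1 / 2 + γ * I - c with he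
  have hinj : Function.Injective e := by
    intro a b hab
    have := congrArg Complex.im hab
    simpa [he] using this
  have key := gap_jensen hUo (r := 8 / 5) (R := 9 / 5) (M := 36 * n) (by norm_num) (by norm_num)
    hUR S.card (fun z => riemannZeta (c + z)) (S.map ⟨e, hinj⟩) (by simp) hfd hM (by
      intro z hz
      rw [Finset.mem_map] at hz
      obtain ⟨γ, hγ, rfl⟩ := hz
      obtain ⟨g1, g2, g3⟩ := hS γ hγ
      constructor
      · have hre : (e γ).re = -(3 / 2) := by
          simp only [he, Complex.sub_re, hcre]
          norm_num
        have him : (e γ).im = γ - (n + 1 / 2) := by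
          simp only [he, Complex.sub_im, hcim]
          simp
        simp only [Function.Embedding.coeFn_mk]
        rw [Complex.norm_eq_sqrt_sq_add_sq, hre, him]
        apply Real.sqrt_le_iff.2
        constructor
        · norm_num
        · nlinarith
      · simpa [he] using g3)
  have hl := hlow (n + 1 / 2)
  rw [← hc] at hl
  simp only [add_zero] at key
  have h98 : (1 : ℝ) ≤ C * (36 * n * ((8 / 5) / (9 / 5)) ^ S.card) :=
    hl.trans (mul_le_mul_of_nonneg_left key hC.le)
  have h99 : ((9 / 8 : ℝ)) ^ S.card ≤ (n : ℝ) ^ 2 := by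
    have e1 : ((8 / 5 : ℝ) / (9 / 5)) ^ S.card = ((9 / 8 : ℝ) ^ S.card)⁻¹ := by
      rw [← inv_pow]; norm_num
    rw [e1] at h98
    have hp : (0 : ℝ) < (9 / 8 : ℝ) ^ S.card := by positivity
    have h2 : (9 / 8 : ℝ) ^ S.card ≤ C * (36 * n) := by
      have := mul_le_mul_of_nonneg_right h98 hp.le
      rw [one_mul] at this
      refine this.trans (le_of_eq ?_)
      field_simp
    nlinarith
  have h100 := Real.log_le_log (by positivity) h99
  rw [Real.log_pow, Real.log_pow] at h100
  rw [div_mul_eq_mul_div, le_div_iff₀ hlog]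
  exact_mod_cast h100

end GapHelpers

/-- Assume RH. Then there are `A > 0` and `n₀ : ℕ` such that for every `n ≥ n₀` there is a
real `T` with `n < T < n + 1` and `|T − γ| > A / log n` for every real `γ` with
`ζ(1/2 + iγ) = 0`; in particular no point `1/2 + iu` with `|u − T| < A / log n` is a zero
of `ζ`. -/
theorem exists_gap_on_critical_line (hRH : RiemannHypothesis) :
    ∃ A : ℝ, 0 < A ∧ ∃ n₀ : ℕ, ∀ n : ℕ, n₀ ≤ n →
      ∃ T : ℝ, (n : ℝ) < T ∧ T < (n : ℝ) + 1 ∧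
        (∀ γ : ℝ, riemannZeta (1 / 2 + γ * I) = 0 → |T - γ| > A / Real.log n) ∧
        (∀ u : ℝ, |u - T| < A / Real.log n → riemannZeta (1 / 2 + u * I) ≠ 0) := by
  obtain ⟨B, hB, n₀, hn₀, hcount⟩ := gap_count
  refine ⟨1 / (4 * (B + 1)), by positivity, n₀, fun n hn => ?_⟩
  set A : ℝ := 1 / (4 * (B + 1)) with hA
  have hn3 : (3 : ℝ) ≤ n := by exact_mod_cast hn₀.trans hn
  have hL : 1 ≤ Real.log n := by
    rw [Real.le_log_iff_exp_le (by linarith)]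
    linarith [Real.exp_one_lt_d9]
  suffices h : ∃ T : ℝ, (n : ℝ) < T ∧ T < (n : ℝ) + 1 ∧
      (∀ γ : ℝ, riemannZeta (1 / 2 + γ * I) = 0 → |T - γ| > A / Real.log n) by
    obtain ⟨T, h1, h2, h3⟩ := h
    refine ⟨T, h1, h2, h3, fun u hu hz => ?_⟩
    have := h3 u hz
    rw [abs_sub_comm] at this
    linarith
  by_contra! hcon
  set N : ℕ := ⌊B * Real.log n⌋₊ + 1 with hN
  have hNlt : B * Real.log n < N := by
    rw [hN]; push_cast; exact Nat.lt_floor_add_one _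
  have hNle : (N : ℝ) ≤ (B + 1) * Real.log n := by
    have := Nat.floor_le (show 0 ≤ B * Real.log n by positivity)
    rw [hN]; push_cast; linarith
  have hNpos : (0 : ℝ) < N := lt_trans (by positivity) hNlt
  set d : ℝ := 1 / (2 * N) with hd
  have hdpos : 0 < d := by positivity
  have hdN : d * (2 * N) = 1 := by rw [hd]; field_simp
  have hAd : A / Real.log n < d := by
    rw [hA, hd, div_div, div_lt_div_iff₀ (by positivity) (by positivity)]
    nlinarith
  have hex : ∀ j : Fin N, ∃ γ : ℝ, riemannZeta (1 / 2 + γ * I) = 0 ∧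
      |n + (2 * (j : ℕ) + 1) * d - γ| ≤ A / Real.log n := by
    intro j
    have hj : ((j : ℕ) : ℝ) + 1 ≤ N := by exact_mod_cast j.2
    have hj0 : (0 : ℝ) ≤ ((j : ℕ) : ℝ) := Nat.cast_nonneg _
    exact hcon _ (by nlinarith) (by nlinarith)
  choose g hg0 hg using hex
  have hg' : ∀ j : Fin N, n + (2 * ((j : ℕ) : ℝ)) * d < g j ∧ g j < n + (2 * ((j : ℕ) : ℝ) + 2) * d := by
    intro j
    have := abs_lt.1 ((hg j).trans_lt hAd)
    constructor <;> nlinarith [this.1, this.2]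
  have hlt : ∀ i j : Fin N, i < j → g i < g j := by
    intro i j hij
    have hij' : ((i : ℕ) : ℝ) + 1 ≤ ((j : ℕ) : ℝ) := by exact_mod_cast hij
    have h1 := (hg' i).2
    have h2 := (hg' j).1
    nlinarith
  have hmono : StrictMono g := fun i j hij => hlt i j hij
  have := hcount n hn (Finset.univ.map ⟨g, hmono.injective⟩) (by
    intro γ hγ
    rw [Finset.mem_map] at hγ
    obtain ⟨j, -, rfl⟩ := hγ
    have hj : ((j : ℕ) : ℝ) + 1 ≤ N := by exact_mod_cast j.2
    have hj0 : (0 : ℝ) ≤ ((j : ℕ) : ℝ) := Nat.cast_nonneg _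
    have := hg' j
    simp only [Function.Embedding.coeFn_mk]
    refine ⟨?_, ?_, hg0 j⟩
    · nlinarith [this.1]
    · nlinarith [this.2])
  simp only [Finset.card_map, Finset.card_univ, Fintype.card_fin] at this
  linarith
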